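/- With $f$, $t_+$ as in the context: $\dfrac{1}{f'(t_+(x))\, t_+(x)^2} = \dfrac{1}{4 x^{3/2}} + O\big(x^{-1/2}\big)$ as $x \to 0^+$. (Up to sign, this quantity is the derivative $\Theta_{x_2}((0,x),(1,0))$ of the Funk metric.) -/

import Mathlib

open Filter Topology Asymptotics

lemma aux_step (g : ℝ → ℝ) (n : ℕ) (hd : ∀ᶠ t in 𝓝 (0:ℝ), DifferentiableAt ℝ g t)
    (h0 : g 0 = 0) (h : deriv g =O[𝓝 (0:ℝ)] fun t => t ^ n) :
    g =O[𝓝 (0:ℝ)] fun t => t ^ (n+1) := by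
  obtain ⟨K, hK⟩ := h.bound
  obtain ⟨r, hr, hb⟩ := Metric.eventually_nhds_iff_ball.1 (hd.and hK)
  refine IsBigO.of_bound |K| ?_
  filter_upwards [Metric.ball_mem_nhds (0:ℝ) hr] with t ht
  have hsub : ∀ y ∈ Metric.closedBall (0:ℝ) |t|, y ∈ Metric.ball (0:ℝ) r := by
    intro y hy
    simp only [Metric.mem_ball, Metric.mem_closedBall, dist_zero_right, Real.norm_eq_abs] at *
    linarith
  have := (convex_closedBall (0:ℝ) |t|).norm_image_sub_le_of_norm_deriv_le
    (f := g) (C := |K| * |t| ^ n) (x := 0) (y := t)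
    (fun y hy => (hb y (hsub y hy)).1)
    (fun y hy => by
      have h1 := (hb y (hsub y hy)).2
      have h2 : |y| ≤ |t| := by simpa using hy
      refine h1.trans ?_
      rw [norm_pow, Real.norm_eq_abs]
      gcongr
      exact le_abs_self K)
    (by simp) (by simp)
  rw [h0, sub_zero, sub_zero] at this
  refine this.trans (le_of_eq ?_)
  rw [norm_pow, Real.norm_eq_abs, pow_succ]; ring

lemma aux_taylor (f : ℝ → ℝ)
    (hf : ContDiffAt ℝ 4 f 0)
    (hf0 : f 0 = 0) (hf1 : deriv f 0 = 0) (hf2 : deriv (deriv f) 0 = 1/2) :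
    ∃ a : ℝ, (fun t => f t - (t^2/4 + a * t^3)) =O[𝓝 (0:ℝ)] (fun t => t ^ 4) ∧
      (fun t => deriv f t - (t/2 + 3 * a * t^2)) =O[𝓝 (0:ℝ)] (fun t => t ^ 3) := by
  have c1 : ContDiffAt ℝ 3 (deriv f) 0 := hf.derivWithin (by norm_num)
  have c2 : ContDiffAt ℝ 2 (deriv (deriv f)) 0 := c1.derivWithin (by norm_num)
  have c3 : ContDiffAt ℝ 1 (deriv (deriv (deriv f))) 0 := c2.derivWithin (by norm_num)
  have d0 : ∀ᶠ t in 𝓝 (0:ℝ), DifferentiableAt ℝ f t :=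
    (hf.eventually (by simp)).mono fun t h => h.differentiableAt (by simp)
  have d1 : ∀ᶠ t in 𝓝 (0:ℝ), DifferentiableAt ℝ (deriv f) t :=
    (c1.eventually (by simp)).mono fun t h => h.differentiableAt (by simp)
  have d2 : ∀ᶠ t in 𝓝 (0:ℝ), DifferentiableAt ℝ (deriv (deriv f)) t :=
    (c2.eventually (by simp)).mono fun t h => h.differentiableAt (by simp)
  set c := deriv (deriv (deriv f)) 0 with hc
  have o3 : (fun t => deriv (deriv (deriv f)) t - c) =O[𝓝 (0:ℝ)] (fun t => t ^ 1) := by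
    simpa using (c3.differentiableAt (by simp)).isBigO_sub
  have o2 : (fun t => deriv (deriv f) t - (1/2 + c * t)) =O[𝓝 (0:ℝ)] (fun t => t ^ 2) := by
    refine aux_step _ 1 ?_ (by simp [hf2]) (o3.congr' ?_ EventuallyEq.rfl)
    · filter_upwards [d2] with t ht
      fun_prop
    · filter_upwards [d2] with t ht
      have h2 : HasDerivAt (fun t : ℝ => 1/2 + c * t) c t := by
        simpa using ((hasDerivAt_id t).const_mul c).const_add (1/2)
      exact (ht.hasDerivAt.sub h2).deriv.symm
  have o1 : (fun t => deriv f t - (t/2 + 3 * (c/6) * t^2)) =O[𝓝 (0:ℝ)] (fun t => t ^ 3) := by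
    refine aux_step _ 2 ?_ (by simp [hf1]) (o2.congr' ?_ EventuallyEq.rfl)
    · filter_upwards [d1] with t ht
      fun_prop
    · filter_upwards [d1] with t ht
      have h2 : HasDerivAt (fun t : ℝ => t/2 + 3 * (c/6) * t^2) (1/2 + c * t) t := by
        convert! ((hasDerivAt_id t).div_const 2).add ((hasDerivAt_pow 2 t).const_mul (3*(c/6))) using 1
        simp; ring
      exact (ht.hasDerivAt.sub h2).deriv.symm
  refine ⟨c/6, ?_, o1⟩
  refine aux_step _ 3 ?_ (by simp [hf0]) (o1.congr' ?_ EventuallyEq.rfl)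
  · filter_upwards [d0] with t ht
    fun_prop
  · filter_upwards [d0] with t ht
    have h2 : HasDerivAt (fun t : ℝ => t^2/4 + (c/6) * t^3) (t/2 + 3 * (c/6) * t^2) t := by
      convert! ((hasDerivAt_pow 2 t).div_const 4).add ((hasDerivAt_pow 3 t).const_mul (c/6)) using 1
      simp; ring
    exact (ht.hasDerivAt.sub h2).deriv.symm

lemma aux_bdd (a K : ℝ) : ∃ M : ℝ, 0 ≤ M ∧ ∀ t u v : ℝ, |t| ≤ 1 → |u| ≤ K → |v| ≤ K →
    |16 * (1/4 + a * t + u * t^2)^3 - (1/2 + 3 * a * t + v * t^2)^2| ≤ M * t^2 := by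
  have hc : IsCompact (Set.Icc (-1:ℝ) 1 ×ˢ (Set.Icc (-K) K ×ˢ Set.Icc (-K) K)) :=
    isCompact_Icc.prod (isCompact_Icc.prod isCompact_Icc)
  let W : ℝ × ℝ × ℝ → ℝ := fun p =>
    3 * p.2.1 + 12 * (a + p.2.1 * p.1)^2 + 16 * p.1 * (a + p.2.1 * p.1)^3
      - p.2.2 - (3 * a + p.2.2 * p.1)^2
  obtain ⟨M, hM⟩ := hc.exists_bound_of_continuousOn (f := W) (by fun_prop)
  refine ⟨|M|, abs_nonneg _, fun t u v ht hu hv => ?_⟩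
  have h := hM (t, u, v) ⟨abs_le.1 ht, abs_le.1 hu, abs_le.1 hv⟩
  have e : 16 * (1/4 + a * t + u * t^2)^3 - (1/2 + 3 * a * t + v * t^2)^2 = W (t,u,v) * t^2 := by
    simp only [W]; ring
  rw [e, abs_mul, abs_of_nonneg (sq_nonneg t)]
  exact mul_le_mul_of_nonneg_right (h.trans (le_abs_self M)) (sq_nonneg t)

lemma aux_final (M t s p q : ℝ) (hM : 0 ≤ M) (ht : 0 < t) (hs : 0 < s)
    (hx : s^2 = t^2 * p) (hp : 1/16 ≤ p) (hp' : p ≤ 1) (hq : 1/4 ≤ q)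
    (h : |16 * p^3 - q^2| ≤ M * t^2) :
    |1 / (t * q * t^2) - 1 / (4 * s^3)| ≤ 256 * M * s⁻¹ := by
  obtain ⟨r, rfl⟩ : ∃ r, s = t * r := ⟨s / t, by field_simp⟩
  have hr : 0 < r := pos_of_mul_pos_right hs ht.le
  have hrp : p = r^2 := by
    have : t^2 * (r^2 - p) = 0 := by linear_combination hx
    rcases mul_eq_zero.1 this with h | h
    · exact absurd h (by positivity)
    · linarith
  subst hrp
  have hr1 : 1/4 ≤ r := by nlinarith
  have hr2 : r ≤ 1 := by nlinarith
  have hq0 : 0 < q := by linarith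
  have e : 1 / (t * q * t^2) - 1 / (4 * (t * r)^3)
      = (16 * (r^2)^3 - q^2) / (t^3 * (q * (4 * r^3) * (4 * r^3 + q))) := by
    field_simp
    ring
  have hr3 : (1/4)^3 ≤ r^3 := by gcongr
  have hD : 1/256 ≤ q * (4 * r^3) * (4 * r^3 + q) := by
    have h1 : (1/4) * (4 * (1/4)^3) * (1/4) ≤ q * (4 * r^3) * (4 * r^3 + q) := by
      gcongr
      nlinarith [pow_pos hr 3]
    norm_num at h1 ⊢
    linarith
  rw [e, abs_div, abs_of_pos (show 0 < t^3 * (q * (4 * r^3) * (4 * r^3 + q)) by positivity)]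
  calc _ ≤ M * t^2 / (t^3 * (1/256)) := by gcongr
    _ = 256 * M * t⁻¹ := by field_simp
    _ ≤ 256 * M * (t * r)⁻¹ := by
      gcongr
      nlinarith

theorem stmt_11 (f tp tm : ℝ → ℝ)
    (hf : ContDiffAt ℝ 4 f 0)
    (hf0 : f 0 = 0) (hf1 : deriv f 0 = 0) (hf2 : deriv (deriv f) 0 = 1/2)
    (hfpos : ∀ᶠ t in 𝓝 (0:ℝ), 0 < deriv (deriv f) t)
    (htp : ∀ᶠ x in 𝓝[>] (0:ℝ), 0 < tp x ∧ f (tp x) = x)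
    (htm : ∀ᶠ x in 𝓝[>] (0:ℝ), tm x < 0 ∧ f (tm x) = x)
    (htp0 : Tendsto tp (𝓝[>] (0:ℝ)) (𝓝 0))
    (htm0 : Tendsto tm (𝓝[>] (0:ℝ)) (𝓝 0)) :
    (fun x => 1 / (deriv f (tp x) * (tp x) ^ 2) - 1 / (4 * x ^ (3/2 : ℝ)))
      =O[𝓝[>] (0:ℝ)] fun x => x ^ (-(1/2) : ℝ) := by
  obtain ⟨a, h1, h2⟩ := aux_taylor f hf hf0 hf1 hf2
  obtain ⟨K1, h1⟩ := h1.bound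
  obtain ⟨K2, h2⟩ := h2.bound
  set K := max K1 K2 with hK
  obtain ⟨M, hM, hb⟩ := aux_bdd a K
  have hsm : ∀ᶠ t in 𝓝 (0:ℝ), |t| < 1 ∧ |a * t| + K * t^2 < 3/16 ∧ |3 * a * t| + K * t^2 < 1/4 := by
    refine (Tendsto.eventually_lt_const (v := 0) (by norm_num) ?_).and
      ((Tendsto.eventually_lt_const (v := 0) (by norm_num) ?_).and
      (Tendsto.eventually_lt_const (v := 0) (by norm_num) ?_))
    · exact Continuous.tendsto' (by fun_prop) _ _ (by simp)
    · exact Continuous.tendsto' (by fun_prop) _ _ (by simp)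
    · exact Continuous.tendsto' (by fun_prop) _ _ (by simp)
  refine IsBigO.of_bound (256 * M) ?_
  filter_upwards [htp, htp0.eventually h1, htp0.eventually h2, htp0.eventually hsm,
    self_mem_nhdsWithin] with x hx k1 k2 k3 hx0
  have hx0 : 0 < x := hx0
  obtain ⟨ht, hfx⟩ := hx
  obtain ⟨m1, m2, m3⟩ := k3
  rw [hfx] at k1
  set t := tp x
  set d := deriv f t
  obtain ⟨u, hu⟩ : ∃ u, x - (t^2/4 + a * t^3) = u * t^4 := ⟨(x - (t^2/4 + a * t^3)) / t^4, by field_simp⟩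
  obtain ⟨v, hv⟩ : ∃ v, d - (t/2 + 3 * a * t^2) = v * t^3 := ⟨(d - (t/2 + 3 * a * t^2)) / t^3, by field_simp⟩
  rw [hu, norm_mul, Real.norm_eq_abs] at k1
  rw [hv, norm_mul, Real.norm_eq_abs] at k2
  have hu' : |u| ≤ K := (le_of_mul_le_mul_right k1 (norm_pos_iff.2 (pow_ne_zero _ ht.ne'))).trans (le_max_left _ _)
  have hv' : |v| ≤ K := (le_of_mul_le_mul_right k2 (norm_pos_iff.2 (pow_ne_zero _ ht.ne'))).trans (le_max_right _ _)
  have b := hb t u v m1.le hu' hv'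
  have ut : |u * t^2| ≤ K * t^2 := by
    rw [abs_mul, abs_of_nonneg (sq_nonneg t)]; gcongr
  have vt : |v * t^2| ≤ K * t^2 := by
    rw [abs_mul, abs_of_nonneg (sq_nonneg t)]; gcongr
  have := abs_le.1 ut
  have := abs_le.1 vt
  have := neg_abs_le (a * t)
  have := le_abs_self (a * t)
  have := neg_abs_le (3 * a * t)
  have hs : 0 < √x := Real.sqrt_pos.2 hx0
  have fin := aux_final M t (√x) (1/4 + a * t + u * t^2) (1/2 + 3 * a * t + v * t^2) hM ht hs
    (by rw [Real.sq_sqrt hx0.le]; linear_combination hu) (by linarith) (by linarith) (by linarith) b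
  have hd : t * (1/2 + 3 * a * t + v * t^2) = d := by linear_combination -hv
  have e1 : x ^ (3/2 : ℝ) = √x ^ 3 := by
    rw [Real.sqrt_eq_rpow, ← Real.rpow_natCast, ← Real.rpow_mul hx0.le]; norm_num
  have e2 : x ^ (-(1/2) : ℝ) = (√x)⁻¹ := by
    rw [Real.sqrt_eq_rpow, Real.rpow_neg hx0.le]
  rw [hd] at fin
  rw [e1, e2, Real.norm_eq_abs, Real.norm_of_nonneg (by positivity)]
  exact fin
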